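/- Let G = (V,E) be a finite simple graph with an even number of nodes and minimum degree at least 1, let A be a set of agents with |A| = |V| partitioned into two types T₁, T₂ each of size |V|/2, and let τ = 1/2. Then there exists a bijective placement p : A → V under which every agent is content (i.e., the placement cost is 0) if and only if G admits a balanced satisfactory partition, i.e., a partition of V into two disjoint sets V₁, V₂ with |V₁| = |V₂| such that every node v ∈ V_i (for i ∈ {1,2}) has at least deg_G(v)/2 of its neighbors inside V_i. -/

import Mathlib

open Finset
open scoped Classical

noncomputable section

namespace Schelling

variable {V A : Type*} [Fintype V] [Fintype A] {k : ℕ}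

/-- The set of neighbors of agent `a` under placement `p`. -/
def nbrs (G : SimpleGraph V) (p : A → V) (a : A) : Finset A :=
  Finset.univ.filter fun b => G.Adj (p a) (p b)

/-- `|N⁺_p(a)|`: the number of neighbors of `a` under `p` having the same type as `a`. -/
def posCount (G : SimpleGraph V) (t : A → Fin k) (p : A → V) (a : A) : ℕ :=
  (Finset.univ.filter fun b => G.Adj (p a) (p b) ∧ t b = t a).card

/-- One-versus-all `|N⁻_p(a)|`: the number of neighbors of `a` whose type differs from `t a`. -/
def negCountAll (G : SimpleGraph V) (t : A → Fin k) (p : A → V) (a : A) : ℕ :=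
  (Finset.univ.filter fun b => G.Adj (p a) (p b) ∧ t b ≠ t a).card

/-- One-versus-one `|N⁻_p(a)|`: the size of a largest set of neighbors of `a`
of one common type different from `t a`. -/
def negCountOne (G : SimpleGraph V) (t : A → Fin k) (p : A → V) (a : A) : ℕ :=
  (Finset.univ.filter fun T : Fin k => T ≠ t a).sup fun T =>
    (Finset.univ.filter fun b => G.Adj (p a) (p b) ∧ t b = T).card

/-- The cost of agent `a` in the one-versus-all version. -/
def costAll (G : SimpleGraph V) (t : A → Fin k) (τ : ℝ) (p : A → V) (a : A) : ℝ :=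
  if nbrs G p a = ∅ then τ
  else max 0 (τ - (posCount G t p a : ℝ) /
    ((posCount G t p a : ℝ) + (negCountAll G t p a : ℝ)))

/-- The cost of agent `a` in the one-versus-one version. -/
def costOne (G : SimpleGraph V) (t : A → Fin k) (τ : ℝ) (p : A → V) (a : A) : ℝ :=
  if nbrs G p a = ∅ then τ
  else max 0 (τ - (posCount G t p a : ℝ) /
    ((posCount G t p a : ℝ) + (negCountOne G t p a : ℝ)))

/-- A swap of the (distinct) agents `a` and `b` turning placement `p` into `q`,
which strictly decreases the cost of both agents (cost function `c`). -/
def SwapMove (c : (A → V) → A → ℝ) (p q : A → V) (a b : A) : Prop :=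
  a ≠ b ∧ q = p ∘ (Equiv.swap a b) ∧ c q a < c p a ∧ c q b < c p b

/-- `q` is obtained from `p` by an improving swap. -/
def ImprovingSwap (c : (A → V) → A → ℝ) (p q : A → V) : Prop :=
  ∃ a b, SwapMove c p q a b

/-- A placement is swap-stable if it admits no improving swap. -/
def SwapStable (c : (A → V) → A → ℝ) (p : A → V) : Prop :=
  ∀ q, ¬ ImprovingSwap c p q

/-- Some finite sequence of improving swaps starting at `p₀` ends in a swap-stable placement. -/
def ReachesStableSwap (c : (A → V) → A → ℝ) (p₀ : A → V) : Prop :=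
  ∃ (n : ℕ) (q : ℕ → A → V), q 0 = p₀ ∧
    (∀ i < n, ImprovingSwap c (q i) (q (i + 1))) ∧ SwapStable c (q n)

/-- A jump of agent `a` to the node `v` (unoccupied under `p`) turning placement `p`
into `q`, which strictly decreases the cost of `a` (cost function `c`). -/
def JumpMove (c : (A → V) → A → ℝ) (p q : A → V) (a : A) (v : V) : Prop :=
  (∀ b, p b ≠ v) ∧ q = Function.update p a v ∧ c q a < c p a

/-- `q` is obtained from `p` by an improving jump. -/
def ImprovingJump (c : (A → V) → A → ℝ) (p q : A → V) : Prop :=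
  ∃ a v, JumpMove c p q a v

/-- A placement is jump-stable if it admits no improving jump. -/
def JumpStable (c : (A → V) → A → ℝ) (p : A → V) : Prop :=
  ∀ q, ¬ ImprovingJump c p q

/-- Some finite sequence of improving jumps starting at `p₀` ends in a jump-stable placement. -/
def ReachesStableJump (c : (A → V) → A → ℝ) (p₀ : A → V) : Prop :=
  ∃ (n : ℕ) (q : ℕ → A → V), q 0 = p₀ ∧
    (∀ i < n, ImprovingJump c (q i) (q (i + 1))) ∧ JumpStable c (q n)

/-- The placement cost: the number of discontent agents (one-versus-all cost). -/
def placementCost (G : SimpleGraph V) (t : A → Fin k) (τ : ℝ) (p : A → V) : ℕ :=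
  (Finset.univ.filter fun a => costAll G t τ p a ≠ 0).card

/-- A graph is `Δ`-regular if every node has exactly `Δ` neighbors. -/
def IsRegular (G : SimpleGraph V) (Δ : ℕ) : Prop :=
  ∀ v : V, (Finset.univ.filter fun u => G.Adj v u).card = Δ

/-- The degree of a node `v` in `G`. -/
def degree (G : SimpleGraph V) (v : V) : ℕ :=
  (Finset.univ.filter fun u => G.Adj v u).card

/-!
A placement of agents with types `t` by a bijection `p` is the same thing as the node coloring
`t ∘ p⁻¹`, and the colorings arising this way are exactly those whose color classes have the sizes
of the types. Since no node is empty, the neighbors of an agent fill all neighbors of its node, so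
the agent is content iff at least a fraction `τ` of the neighbors of its node share its color.
For two equally large types and `τ = 1 / 2`, the color classes form a balanced satisfactory
partition.
-/

section Cost

omit [Fintype V]

variable {G : SimpleGraph V} {t : A → Fin k} {p : A → V} {τ : ℝ} {a : A}

theorem posCount_add_negCountAll :
    posCount G t p a + negCountAll G t p a = #(nbrs G p a) := by
  simpa only [posCount, negCountAll, nbrs, filter_filter] using
    card_filter_add_card_filter_not (s := nbrs G p a) fun b => t b = t a

theorem costAll_eq_zero_iff (h : (nbrs G p a).Nonempty) :
    costAll G t τ p a = 0 ↔ τ * #(nbrs G p a) ≤ posCount G t p a := by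
  have hpos : (0 : ℝ) < #(nbrs G p a) := mod_cast h.card_pos
  rw [costAll, if_neg h.ne_empty, ← Nat.cast_add, posCount_add_negCountAll, max_eq_left_iff,
    sub_nonpos, le_div_iff₀ hpos]

theorem placementCost_eq_zero_iff :
    placementCost G t τ p = 0 ↔ ∀ a, costAll G t τ p a = 0 := by
  simp [placementCost, filter_eq_empty_iff]

end Cost

section Coloring

variable {β : Type*} [DecidableEq β]

/-- A coloring `c` of the nodes, encoding the partition of `V` into its color classes, is
`τ`-satisfactory if every node has at least a fraction `τ` of its neighbors in its own class.
Classes may be empty. -/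
def IsSatisfactory (G : SimpleGraph V) (τ : ℝ) (c : V → β) : Prop :=
  ∀ v, τ * degree G v ≤ #{u | G.Adj v u ∧ c u = c v}

theorem isSatisfactory_half_iff {G : SimpleGraph V} {c : V → β} :
    IsSatisfactory G (1 / 2) c ↔ ∀ i, ∀ v ∈ univ.filter (c · = i),
      degree G v ≤ 2 * #((univ.filter (c · = i)).filter fun u => G.Adj v u) := by
  have half_mul_le (m n : ℕ) : (1 / 2 : ℝ) * m ≤ n ↔ m ≤ 2 * n := by
    rw [one_div, inv_mul_le_iff₀ two_pos]
    norm_cast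
  simp only [IsSatisfactory, half_mul_le, mem_filter_univ, filter_filter, and_comm (a := G.Adj _ _)]
  exact ⟨by rintro h _ v rfl; exact h v, fun h v => h _ v rfl⟩

theorem card_nbrs_of_bijective (G : SimpleGraph V) {p : A → V} (hp : Function.Bijective p) (a : A) :
    #(nbrs G p a) = degree G (p a) :=
  card_bijective p hp (by simp [nbrs])

theorem posCount_comp (G : SimpleGraph V) (c : V → Fin k) {p : A → V}
    (hp : Function.Bijective p) (a : A) :
    posCount G (c ∘ p) p a = #{u | G.Adj (p a) u ∧ c u = c (p a)} :=
  card_bijective p hp (by simp)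

theorem placementCost_comp_eq_zero_iff {G : SimpleGraph V} (hmin : ∀ v, 0 < degree G v) {τ : ℝ}
    {c : V → Fin k} {p : A → V} (hp : Function.Bijective p) :
    placementCost G (c ∘ p) τ p = 0 ↔ IsSatisfactory G τ c := by
  have nbrs_nonempty (a : A) : (nbrs G p a).Nonempty := by
    rw [← card_pos, card_nbrs_of_bijective G hp]
    exact hmin (p a)
  rw [IsSatisfactory, hp.surjective.forall]
  simp only [placementCost_eq_zero_iff, costAll_eq_zero_iff (nbrs_nonempty _),
    card_nbrs_of_bijective G hp, posCount_comp G c hp]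

theorem exists_bijective_comp_eq_iff_card_fiber_eq {c : V → β} {t : A → β} :
    (∃ p : A → V, Function.Bijective p ∧ c ∘ p = t) ↔
      ∀ i, #{v | c v = i} = #{a | t a = i} := by
  constructor
  · rintro ⟨p, hp, rfl⟩ i
    exact (card_bijective p hp (by simp)).symm
  · intro h
    have fiber_equiv (i : β) : Nonempty ({a // t a = i} ≃ {v // c v = i}) := by
      rw [← Fintype.card_eq, Fintype.card_subtype, Fintype.card_subtype, h]
    let e : A ≃ V := Equiv.ofFiberEquiv fun i => (fiber_equiv i).some
    exact ⟨e, e.bijective, funext (Equiv.ofFiberEquiv_map _)⟩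

theorem exists_coloring_fin_two_iff_exists_partition {P : Finset V → Finset V → Prop} :
    (∃ c : V → Fin 2, P {v | c v = 0} {v | c v = 1}) ↔
      ∃ V₁ V₂ : Finset V, V₁ ∪ V₂ = univ ∧ Disjoint V₁ V₂ ∧ P V₁ V₂ := by
  constructor
  · rintro ⟨c, hc⟩
    refine ⟨_, _, ?_, ?_, hc⟩
    · ext v
      simpa using Fin.exists_fin_two.1 ⟨c v, rfl⟩
    · exact disjoint_filter.2 fun v _ h₀ h₁ => zero_ne_one (h₀.symm.trans h₁)
  · rintro ⟨V₁, V₂, hunion, hdisj, hP⟩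
    obtain rfl : V₁ᶜ = V₂ := (IsCompl.of_eq hdisj.eq_bot hunion).compl_eq
    exact ⟨fun v => if v ∈ V₁ then 0 else 1, by simpa [filter_not, ← compl_eq_univ_sdiff] using hP⟩

theorem card_fiber_fin_two_eq_half_iff {c : V → Fin 2} :
    (∀ i, #{v | c v = i} = Fintype.card V / 2) ↔ #{v | c v = 0} = #{v | c v = 1} := by
  have card_add_card : #{v | c v = 0} + #{v | c v = 1} = Fintype.card V := by
    rw [← Fin.sum_univ_two fun i => #{v | c v = i}, sum_card_fiberwise_eq_card_filter]
    simp
  rw [Fin.forall_fin_two]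
  omega

theorem exists_balanced_satisfactory_coloring_iff {G : SimpleGraph V} :
    (∃ c : V → Fin 2, (∀ i, #{v | c v = i} = Fintype.card V / 2) ∧ IsSatisfactory G (1 / 2) c) ↔
      ∃ V₁ V₂ : Finset V, V₁ ∪ V₂ = univ ∧ Disjoint V₁ V₂ ∧ #V₁ = #V₂ ∧
        (∀ v ∈ V₁, degree G v ≤ 2 * #(V₁.filter fun u => G.Adj v u)) ∧
        (∀ v ∈ V₂, degree G v ≤ 2 * #(V₂.filter fun u => G.Adj v u)) := by
  rw [← exists_coloring_fin_two_iff_exists_partition]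
  simp only [card_fiber_fin_two_eq_half_iff, isSatisfactory_half_iff, Fin.forall_fin_two]

end Coloring

theorem statement12_general {G : SimpleGraph V} (hmin : ∀ v, 0 < degree G v) {t : A → Fin k}
    {τ : ℝ} :
    (∃ p : A → V, Function.Bijective p ∧ placementCost G t τ p = 0) ↔
      ∃ c : V → Fin k, (∀ i, #{v | c v = i} = #{a | t a = i}) ∧ IsSatisfactory G τ c := by
  simp only [← exists_bijective_comp_eq_iff_card_fiber_eq]
  constructor
  · rintro ⟨p, hp, hcost⟩
    obtain ⟨c, rfl⟩ : ∃ c : V → Fin k, c ∘ p = t :=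
      ⟨t ∘ (Equiv.ofBijective p hp).symm,
        funext fun a => congrArg t (Equiv.ofBijective_symm_apply_apply p hp a)⟩
    exact ⟨c, ⟨p, hp, rfl⟩, (placementCost_comp_eq_zero_iff hmin hp).1 hcost⟩
  · rintro ⟨c, ⟨p, hp, rfl⟩, hc⟩
    exact ⟨p, hp, (placementCost_comp_eq_zero_iff hmin hp).2 hc⟩

/-- For a graph with an even number of nodes and minimum degree at least `1`, two agent
types each of size `|V|/2` on `|A| = |V|` agents and `τ = 1/2`: a bijective placement in
which every agent is content exists iff `G` admits a balanced satisfactory partition. -/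
theorem statement12 {V A : Type*} [Fintype V] [Fintype A]
    (G : SimpleGraph V) (heven : Even (Fintype.card V))
    (hmin : ∀ v, 0 < degree G v)
    (t : A → Fin 2) (hcard : Fintype.card A = Fintype.card V)
    (h0 : (Finset.univ.filter fun a => t a = 0).card = Fintype.card V / 2)
    (h1 : (Finset.univ.filter fun a => t a = 1).card = Fintype.card V / 2) :
    (∃ p : A → V, Function.Bijective p ∧ placementCost G t (1 / 2 : ℝ) p = 0) ↔
    (∃ V₁ V₂ : Finset V, V₁ ∪ V₂ = Finset.univ ∧ Disjoint V₁ V₂ ∧ V₁.card = V₂.card ∧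
      (∀ v ∈ V₁, degree G v ≤ 2 * (V₁.filter fun u => G.Adj v u).card) ∧
      (∀ v ∈ V₂, degree G v ≤ 2 * (V₂.filter fun u => G.Adj v u).card)) := by
  have card_type : ∀ i, #{a | t a = i} = Fintype.card V / 2 := Fin.forall_fin_two.2 ⟨h0, h1⟩
  rw [statement12_general hmin, ← exists_balanced_satisfactory_coloring_iff]
  simp only [card_type]

end Schelling
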